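/- Let F(x) = 4x(1−x). Let p₀ be a probability density on [0,1] of bounded variation (p₀ ≥ 0, ∫₀¹ p₀ = 1, and the variation of p₀ on [0,1] is finite), let μ₀ be the measure with density p₀, and let p_n be the Radon–Nikodym derivative of (F^n)_*μ₀ with respect to Lebesgue measure. Then there exists a constant c (depending only on p₀) such that ∫₀¹ |p_n(x) − q(x)| dx ≤ c/2ⁿ for all n ∈ ℕ, where q(x) = 1/(π·√(x(1−x))) for 0 < x < 1. -/

import Mathlib

open MeasureTheory Filter Topology

/-- The logistic map with parameter `r = 4`. -/
noncomputable def logisticMap (x : ℝ) : ℝ := 4 * x * (1 - x)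

/-- The invariant density of the logistic map with `r = 4`. -/
noncomputable def logisticDensity (x : ℝ) : ℝ :=
  if 0 < x ∧ x < 1 then 1 / (Real.pi * Real.sqrt (x * (1 - x))) else 0


namespace LogisticAux

open Set

/-- Transfer operator acting on the ratio `p / q`. -/
noncomputable def L (h : ℝ → ℝ) (x : ℝ) : ℝ :=
  (h ((1 - Real.sqrt (1 - x)) / 2) + h ((1 + Real.sqrt (1 - x)) / 2)) / 2

noncomputable def w (x : ℝ) : ℝ := Real.pi * Real.sqrt (x * (1 - x))

lemma measurable_L {h : ℝ → ℝ} (hh : Measurable h) : Measurable (L h) := by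
  unfold L
  have h1 : Measurable fun x : ℝ => (1 - Real.sqrt (1 - x)) / 2 := by fun_prop
  have h2 : Measurable fun x : ℝ => (1 + Real.sqrt (1 - x)) / 2 := by fun_prop
  exact ((hh.comp h1).add (hh.comp h2)).div_const 2

lemma L_nonneg {h : ℝ → ℝ} (hh : ∀ x, 0 ≤ h x) (x : ℝ) : 0 ≤ L h x := by
  unfold L
  have := hh ((1 - Real.sqrt (1 - x)) / 2)
  have := hh ((1 + Real.sqrt (1 - x)) / 2)
  linarith

lemma measurable_q : Measurable logisticDensity := by
  unfold logisticDensity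
  refine Measurable.ite ?_ (by fun_prop) measurable_const
  exact measurableSet_Ioo (a := (0:ℝ)) (b := 1)

lemma measurable_F : Measurable logisticMap := by
  unfold logisticMap; fun_prop

lemma q_nonneg (x : ℝ) : 0 ≤ logisticDensity x := by
  unfold logisticDensity
  split_ifs
  · positivity
  · exact le_rfl

lemma q_zero {x : ℝ} (hx : x ∉ Ioo (0:ℝ) 1) : logisticDensity x = 0 :=
  if_neg hx

lemma q_eq {x : ℝ} (hx : x ∈ Ioo (0:ℝ) 1) :
    logisticDensity x = 1 / (Real.pi * Real.sqrt (x * (1 - x))) := if_pos hx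

lemma var_L (h : ℝ → ℝ) :
    eVariationOn (L h) (Icc 0 1) ≤ eVariationOn h (Icc 0 1) / 2 := by
  have hs : eVariationOn h (Icc (0:ℝ) (1/2)) + eVariationOn h (Icc (1/2:ℝ) 1)
      = eVariationOn h (Icc (0:ℝ) 1) := by
    have := eVariationOn.Icc_add_Icc h (s := univ) (a := (0:ℝ)) (b := 1/2) (c := 1)
      (by norm_num) (by norm_num) (mem_univ _)
    simpa only [univ_inter] using this
  have hsq : ∀ x ∈ Icc (0:ℝ) 1, Real.sqrt (1 - x) ∈ Icc (0:ℝ) 1 := by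
    intro x hx
    exact ⟨Real.sqrt_nonneg _, Real.sqrt_le_iff.2 (by constructor <;> linarith [hx.1])⟩
  have ha := eVariationOn.comp_le_of_monotoneOn h (s := Icc (0:ℝ) (1/2)) (t := Icc (0:ℝ) 1)
    (fun x => (1 - Real.sqrt (1 - x)) / 2)
    (by
      intro x _ y _ hxy
      have : Real.sqrt (1 - y) ≤ Real.sqrt (1 - x) := Real.sqrt_le_sqrt (by linarith)
      dsimp only; linarith)
    (by
      intro x hx
      have := hsq x hx
      constructor <;> dsimp only <;> linarith [this.1, this.2])
  have hb := eVariationOn.comp_le_of_antitoneOn h (s := Icc (1/2:ℝ) 1) (t := Icc (0:ℝ) 1)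
    (fun x => (1 + Real.sqrt (1 - x)) / 2)
    (by
      intro x _ y _ hxy
      have : Real.sqrt (1 - y) ≤ Real.sqrt (1 - x) := Real.sqrt_le_sqrt (by linarith)
      dsimp only; linarith)
    (by
      intro x hx
      have := hsq x hx
      constructor <;> dsimp only <;> linarith [this.1, this.2])
  have key : eVariationOn (L h) (Icc 0 1) ≤
      (eVariationOn (h ∘ (fun x => (1 - Real.sqrt (1 - x)) / 2)) (Icc 0 1)
      + eVariationOn (h ∘ (fun x => (1 + Real.sqrt (1 - x)) / 2)) (Icc 0 1)) / 2 := by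
    apply iSup_le
    rintro ⟨n, u, hu, us⟩
    dsimp only
    grw [← eVariationOn.sum_le (n := n) hu us, ← eVariationOn.sum_le (n := n) hu us]
    rw [← Finset.sum_add_distrib, div_eq_mul_inv, Finset.sum_mul]
    apply Finset.sum_le_sum
    intro i _
    simp only [Function.comp, edist_dist, L, Real.dist_eq]
    rw [← ENNReal.ofReal_add (abs_nonneg _) (abs_nonneg _)]
    have : (2:ENNReal)⁻¹ = ENNReal.ofReal (2⁻¹) := by
      rw [ENNReal.ofReal_inv_of_pos (by norm_num)]; norm_num
    rw [this, ← ENNReal.ofReal_mul (by positivity)]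
    apply ENNReal.ofReal_le_ofReal
    rw [← div_eq_mul_inv, ← sub_div, abs_div, abs_of_pos (by norm_num : (0:ℝ) < 2)]
    gcongr
    rw [add_sub_add_comm]
    exact abs_add_le _ _
  refine key.trans ?_
  rw [← hs]
  gcongr

lemma bv_w : BoundedVariationOn w (Icc 0 1) := by
  have hs : eVariationOn w (Icc (0:ℝ) (1/2)) + eVariationOn w (Icc (1/2:ℝ) 1)
      = eVariationOn w (Icc (0:ℝ) 1) := by
    have := eVariationOn.Icc_add_Icc w (s := univ) (a := (0:ℝ)) (b := 1/2) (c := 1)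
      (by norm_num) (by norm_num) (mem_univ _)
    simpa only [univ_inter] using this
  have hmono : MonotoneOn w (Icc (0:ℝ) (1/2)) := by
    intro x hx y hy hxy
    unfold w
    have : x * (1 - x) ≤ y * (1 - y) := by nlinarith [hx.1, hx.2, hy.1, hy.2]
    gcongr
  have h1 : eVariationOn w (Icc (0:ℝ) (1/2)) ≠ ⊤ := by
    have := hmono.eVariationOn_eq (a := 0) (b := 1/2) (by norm_num) (by norm_num)
    rw [inter_self] at this
    rw [this]; exact ENNReal.ofReal_ne_top
  have h2 := eVariationOn.comp_le_of_antitoneOn w (s := Icc (0:ℝ) (1/2)) (t := Icc (1/2:ℝ) 1)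
    (fun x => 1 - x) (by intro x _ y _ hxy; dsimp only; linarith)
    (by intro x hx; constructor <;> dsimp only <;> linarith [hx.1, hx.2])
  have h3 : w ∘ (fun x => 1 - x) = w := by
    funext x; simp only [Function.comp, w]; congr 2; ring
  rw [h3] at h2
  unfold BoundedVariationOn
  rw [← hs]
  exact ENNReal.add_ne_top.2 ⟨h1, ne_top_of_le_ne_top h1 h2⟩

/-- Pointwise Jacobian identity. -/
lemma jac {x : ℝ} (hx : x ∈ Ioo (0:ℝ) 1) (hx2 : x ≠ 1/2) :
    |4 - 8 * x| * logisticDensity (logisticMap x) = 2 * logisticDensity x := by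
  have h0 : 0 < x * (1 - x) := mul_pos hx.1 (by linarith [hx.2])
  have h1 : 0 < |1 - 2 * x| := abs_pos.2 (fun h => hx2 (by linarith))
  have h1' : 0 < (1 - 2 * x)^2 := by rw [← sq_abs]; positivity
  have hF : logisticMap x ∈ Ioo (0:ℝ) 1 := by
    unfold logisticMap
    constructor <;> nlinarith
  rw [q_eq hF, q_eq hx]
  have e : logisticMap x * (1 - logisticMap x) = (2 * |1 - 2 * x|)^2 * (x * (1 - x)) := by
    rw [mul_pow, sq_abs]; unfold logisticMap; ring
  rw [e, Real.sqrt_mul (by positivity), Real.sqrt_sq (by positivity)]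
  have e2 : |4 - 8 * x| = 4 * |1 - 2 * x| := by
    rw [show 4 - 8 * x = 4 * (1 - 2 * x) by ring, abs_mul]; norm_num
  rw [e2]
  have := Real.sqrt_pos.2 h0
  have := Real.pi_pos
  field_simp
  norm_num

lemma image1 : logisticMap '' Ioo (0:ℝ) (1/2) = Ioo 0 1 := by
  ext y
  constructor
  · rintro ⟨x, hx, rfl⟩
    have h2 : 0 < (1 - 2 * x)^2 := by have := hx.2; apply pow_pos; linarith
    unfold logisticMap
    constructor
    · have := hx.1; have := hx.2; nlinarith
    · nlinarith
  · intro hy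
    have hp : 0 < Real.sqrt (1 - y) := Real.sqrt_pos.2 (by linarith [hy.2])
    have hl : Real.sqrt (1 - y) < 1 := by
      rw [Real.sqrt_lt' one_pos]; linarith [hy.1]
    have hq := Real.sq_sqrt (show 0 ≤ 1 - y by linarith [hy.2])
    refine ⟨(1 - Real.sqrt (1 - y)) / 2, ⟨by linarith, by linarith⟩, ?_⟩
    unfold logisticMap
    linear_combination -hq

lemma F_symm (x : ℝ) : logisticMap (1 - x) = logisticMap x := by unfold logisticMap; ring

lemma image2 : logisticMap '' Ioo (1/2:ℝ) 1 = Ioo 0 1 := by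
  rw [← image1]
  ext y
  constructor
  · rintro ⟨x, hx, rfl⟩
    exact ⟨1 - x, ⟨by linarith [hx.2], by linarith [hx.1]⟩, F_symm x⟩
  · rintro ⟨x, hx, rfl⟩
    exact ⟨1 - x, ⟨by linarith [hx.2], by linarith [hx.1]⟩, F_symm x⟩

lemma sqrtF (x : ℝ) : Real.sqrt (1 - logisticMap x) = |1 - 2 * x| := by
  rw [← Real.sqrt_sq_eq_abs]; congr 1; unfold logisticMap; ring

lemma deriv_F (x : ℝ) : HasDerivAt logisticMap (4 - 8 * x) x := by
  have h := ((hasDerivAt_id x).const_mul 4).mul ((hasDerivAt_id x).const_sub 1)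
  refine HasDerivAt.congr_deriv (f' := _) h ?_
  simp only [id]; ring

/-- Change of variables on one branch. -/
lemma branch {s : Set ℝ} (hs : MeasurableSet s) (hsub : s ⊆ Ioo 0 1) (hhalf : (1/2:ℝ) ∉ s)
    (himg : logisticMap '' s = Ioo 0 1) (hinj : InjOn logisticMap s)
    (b : ℝ → ℝ) (hb : ∀ x ∈ s, b (logisticMap x) = x) (h : ℝ → ℝ) (G : ℝ → ENNReal) :
    ∫⁻ y in Ioo 0 1, ENNReal.ofReal (logisticDensity y * (h (b y) / 2)) * G y
      = ∫⁻ x in s, ENNReal.ofReal (logisticDensity x * h x) * G (logisticMap x) := by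
  rw [← himg, lintegral_image_eq_lintegral_abs_deriv_mul hs
    (fun x _ => (deriv_F x).hasDerivWithinAt) hinj]
  apply setLIntegral_congr_fun hs
  intro x hx
  dsimp only
  rw [← mul_assoc, ← ENNReal.ofReal_mul (abs_nonneg _), hb x hx]
  congr 2
  have := jac (hsub hx) (fun h => hhalf (h ▸ hx))
  linear_combination (h x / 2) * this

lemma step {h : ℝ → ℝ} (hm : Measurable h) (hn : ∀ x, 0 ≤ h x) :
    (volume.withDensity (fun y => ENNReal.ofReal (logisticDensity y * h y))).map logisticMap
      = volume.withDensity (fun y => ENNReal.ofReal (logisticDensity y * L h y)) := by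
  have hinj1 : InjOn logisticMap (Ioo (0:ℝ) (1/2)) := by
    intro x hx y hy hxy
    have h1 := sqrtF x
    have h2 := sqrtF y
    rw [hxy, h2, abs_of_pos (by linarith [hy.2]), abs_of_pos (by linarith [hx.2])] at h1
    linarith
  have hinj2 : InjOn logisticMap (Ioo (1/2:ℝ) 1) := by
    intro x hx y hy hxy
    have h1 := sqrtF x
    have h2 := sqrtF y
    rw [hxy, h2, abs_of_neg (by linarith [hy.1]), abs_of_neg (by linarith [hx.1])] at h1
    linarith
  ext A hA
  rw [Measure.map_apply measurable_F hA, withDensity_apply _ (measurable_F hA),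
    withDensity_apply _ hA, ← lintegral_indicator (measurable_F hA), ← lintegral_indicator hA]
  set G : ℝ → ENNReal := A.indicator 1 with hG
  have hGm : Measurable G := measurable_one.indicator hA
  have e1 : ∀ (k : ℝ → ℝ), ∫⁻ x, A.indicator (fun y => ENNReal.ofReal (logisticDensity y * k y)) x
      = ∫⁻ x in Ioo (0:ℝ) 1, ENNReal.ofReal (logisticDensity x * k x) * G x := by
    intro k
    rw [← lintegral_indicator measurableSet_Ioo]
    apply lintegral_congr
    intro x
    by_cases hx : x ∈ Ioo (0:ℝ) 1 <;> by_cases hxA : x ∈ A <;> simp [hx, hxA, hG, q_zero]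
  have e2 : ∫⁻ x, (logisticMap ⁻¹' A).indicator
        (fun y => ENNReal.ofReal (logisticDensity y * h y)) x
      = ∫⁻ x in Ioo (0:ℝ) 1, ENNReal.ofReal (logisticDensity x * h x) * G (logisticMap x) := by
    rw [← lintegral_indicator measurableSet_Ioo]
    apply lintegral_congr
    intro x
    by_cases hx : x ∈ Ioo (0:ℝ) 1 <;> by_cases hxA : logisticMap x ∈ A <;>
      simp [hx, hxA, hG, q_zero]
  rw [e1, e2]
  have b1 := branch measurableSet_Ioo (Ioo_subset_Ioo le_rfl (by norm_num)) (by simp) image1 hinj1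
    (fun x => (1 - Real.sqrt (1 - x)) / 2) (by
      intro x hx; rw [sqrtF, abs_of_pos (by linarith [hx.2])]; ring) h G
  have b2 := branch measurableSet_Ioo (Ioo_subset_Ioo (by norm_num) le_rfl) (by simp) image2 hinj2
    (fun x => (1 + Real.sqrt (1 - x)) / 2) (by
      intro x hx; rw [sqrtF, abs_of_neg (by linarith [hx.1])]; ring) h G
  have hq := measurable_q
  have split : ∫⁻ x in Ioo (0:ℝ) 1, ENNReal.ofReal (logisticDensity x * h x) * G (logisticMap x)
      = (∫⁻ x in Ioo (0:ℝ) (1/2), ENNReal.ofReal (logisticDensity x * h x) * G (logisticMap x))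
      + ∫⁻ x in Ioo (1/2:ℝ) 1, ENNReal.ofReal (logisticDensity x * h x) * G (logisticMap x) := by
    rw [← Ioo_union_Ico_eq_Ioo (show (0:ℝ) < 1/2 by norm_num) (show (1/2:ℝ) ≤ 1 by norm_num),
      lintegral_union measurableSet_Ico]
    · congr 1
      exact setLIntegral_congr Ioo_ae_eq_Ico.symm
    · rw [Set.disjoint_left]
      intro x hx hx'
      exact absurd hx.2 (not_lt.2 hx'.1)
  rw [split, ← b1, ← b2, ← lintegral_add_left]
  · apply lintegral_congr
    intro x
    rw [← add_mul, ← ENNReal.ofReal_add]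
    · congr 2
      unfold L; ring
    · exact mul_nonneg (q_nonneg _) (by linarith [hn ((1 - Real.sqrt (1 - x)) / 2)])
    · exact mul_nonneg (q_nonneg _) (by linarith [hn ((1 + Real.sqrt (1 - x)) / 2)])
  · have h1 : Measurable fun x : ℝ => (1 - Real.sqrt (1 - x)) / 2 := by fun_prop
    have h2 := hm.comp h1
    exact ((hq.mul (h2.div_const 2)).ennreal_ofReal).mul hGm

lemma q_int : IntegrableOn logisticDensity (Icc 0 1) ∧
    ∫ x in Icc (0:ℝ) 1, logisticDensity x = 1 := by
  have hc : ContinuousOn (fun x : ℝ => Real.arcsin (2 * x - 1) / Real.pi) (Icc 0 1) := by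
    have := Real.continuous_arcsin
    fun_prop
  have hd : ∀ x ∈ Ioo (0:ℝ) 1,
      HasDerivAt (fun x : ℝ => Real.arcsin (2 * x - 1) / Real.pi) (logisticDensity x) x := by
    intro x hx
    have hin : HasDerivAt (fun x : ℝ => 2 * x - 1) 2 x := by
      simpa using ((hasDerivAt_id x).const_mul 2).sub_const 1
    have ha := Real.hasDerivAt_arcsin (x := 2 * x - 1) (by linarith [hx.1]) (by linarith [hx.2])
    have := (ha.comp x hin).div_const Real.pi
    refine HasDerivAt.congr_deriv (f' := _) this ?_
    rw [q_eq hx, show 1 - (2 * x - 1)^2 = 2^2 * (x * (1 - x)) by ring,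
      Real.sqrt_mul (by norm_num), Real.sqrt_sq (by norm_num)]
    have := Real.sqrt_pos.2 (mul_pos hx.1 (show 0 < 1 - x by linarith [hx.2]))
    have := Real.pi_pos
    field_simp
  have hi := intervalIntegral.integrableOn_deriv_of_nonneg hc hd (fun x _ => q_nonneg x)
  refine ⟨(integrableOn_Icc_iff_integrableOn_Ioc (by simp)).2 hi, ?_⟩
  have := intervalIntegral.integral_eq_sub_of_hasDerivAt_of_le zero_le_one hc hd
    ((intervalIntegrable_iff_integrableOn_Ioc_of_le zero_le_one).2 hi)
  rw [integral_Icc_eq_integral_Ioc, ← intervalIntegral.integral_of_le zero_le_one, this]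
  have := Real.pi_pos
  norm_num
  field_simp
  norm_num

lemma iter {h : ℝ → ℝ} (hm : Measurable h) (hn : ∀ x, 0 ≤ h x) (n : ℕ) :
    Measurable (L^[n] h) ∧ (∀ x, 0 ≤ (L^[n] h) x) ∧
    eVariationOn (L^[n] h) (Icc 0 1) ≤ eVariationOn h (Icc 0 1) / 2 ^ n ∧
    (volume.withDensity (fun y => ENNReal.ofReal (logisticDensity y * h y))).map (logisticMap^[n])
      = volume.withDensity (fun y => ENNReal.ofReal (logisticDensity y * (L^[n] h) y)) := by
  induction n with
  | zero => simp [hm, hn]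
  | succ n ih =>
    obtain ⟨i1, i2, i3, i4⟩ := ih
    rw [Function.iterate_succ', Function.iterate_succ']
    refine ⟨measurable_L i1, L_nonneg i2, ?_, ?_⟩
    · refine (var_L _).trans ?_
      grw [i3]
      rw [pow_succ, div_eq_mul_inv, div_eq_mul_inv, div_eq_mul_inv, mul_assoc,
        ENNReal.mul_inv (by simp) (by simp)]
    · rw [← Measure.map_map measurable_F (measurable_F.iterate n), i4]
      exact step i1 i2

end LogisticAux

open LogisticAux in
/-- For an initial probability density `p₀` on `[0,1]` of bounded
variation, the densities `pₙ` of `(Fⁿ)_* μ₀` converge in `L¹[0,1]` to the invariant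
density `q` at rate `O(2⁻ⁿ)`: there is a constant `c` (depending only on `p₀`) with
`‖pₙ − q‖_{L¹[0,1]} ≤ c / 2ⁿ` for all `n`. -/
theorem logistic_L1_convergence_rate_of_boundedVariation
    (p₀ : ℝ → ℝ) (hmeas : Measurable p₀) (hpos : ∀ x, 0 ≤ p₀ x)
    (hsupp : ∀ x, x ∉ Set.Icc (0 : ℝ) 1 → p₀ x = 0)
    (hint : IntegrableOn p₀ (Set.Icc (0 : ℝ) 1))
    (hnorm : ∫ x in Set.Icc (0 : ℝ) 1, p₀ x = 1)
    (hbv : BoundedVariationOn p₀ (Set.Icc (0 : ℝ) 1)) :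
    ∃ c : ℝ, ∀ n : ℕ,
      (∫ x in Set.Icc (0 : ℝ) 1,
        |((((volume.withDensity (fun y => ENNReal.ofReal (p₀ y))).map
            (logisticMap^[n])).rnDeriv volume) x).toReal - logisticDensity x|)
        ≤ c / 2 ^ n := by
  set h : ℝ → ℝ := p₀ * w with hh
  have hw : Measurable w := by unfold w; fun_prop
  have hm : Measurable h := hmeas.mul hw
  have hn : ∀ x, 0 ≤ h x := fun x => mul_nonneg (hpos x) (by unfold w; positivity)
  have hV : eVariationOn h (Set.Icc 0 1) ≠ ⊤ := hbv.mul bv_w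
  obtain ⟨qi, q1⟩ := q_int
  have hdens : volume.withDensity (fun y => ENNReal.ofReal (p₀ y))
      = volume.withDensity (fun y => ENNReal.ofReal (logisticDensity y * h y)) := by
    apply withDensity_congr_ae
    have h0 : ∀ᵐ x : ℝ, x ≠ 0 := by simp [ae_iff, measure_singleton]
    have h1 : ∀ᵐ x : ℝ, x ≠ 1 := by simp [ae_iff, measure_singleton]
    filter_upwards [h0, h1] with x hx0 hx1
    by_cases hx : x ∈ Set.Ioo (0:ℝ) 1
    · congr 1
      rw [q_eq hx, hh]
      have := Real.sqrt_pos.2 (mul_pos hx.1 (show 0 < 1 - x by linarith [hx.2]))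
      have := Real.pi_pos
      simp only [Pi.mul_apply, w]
      field_simp
    · rw [q_zero hx, hsupp x, zero_mul]
      intro hx'
      exact hx ⟨lt_of_le_of_ne hx'.1 (Ne.symm hx0), lt_of_le_of_ne hx'.2 hx1⟩
  have hmass : (volume.withDensity (fun y => ENNReal.ofReal (p₀ y))) Set.univ = 1 := by
    rw [withDensity_apply _ MeasurableSet.univ, Measure.restrict_univ,
      ← setLIntegral_eq_of_support_subset (s := Set.Icc (0:ℝ) 1),
      ← ofReal_integral_eq_lintegral_ofReal hint (ae_of_all _ hpos), hnorm, ENNReal.ofReal_one]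
    intro x hx
    by_contra hx'
    exact hx (by simp [hsupp x hx'])
  refine ⟨(eVariationOn h (Set.Icc 0 1)).toReal, fun n => ?_⟩
  obtain ⟨i1, i2, i3, i4⟩ := iter hm hn n
  set k := L^[n] h with hk
  set V := (eVariationOn h (Set.Icc 0 1)).toReal with hVdef
  have hVn : eVariationOn k (Set.Icc 0 1) ≠ ⊤ :=
    ne_top_of_le_ne_top (ENNReal.div_ne_top hV (by simp)) i3
  have hVle : (eVariationOn k (Set.Icc 0 1)).toReal ≤ V / 2 ^ n := by
    have := ENNReal.toReal_mono (ENNReal.div_ne_top hV (by simp)) i3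
    simpa [ENNReal.toReal_div] using this
  have hosc : ∀ x ∈ Set.Icc (0:ℝ) 1, ∀ y ∈ Set.Icc (0:ℝ) 1, k x - k y ≤ V / 2 ^ n :=
    fun x hx y hy => (BoundedVariationOn.sub_le hVn hx hy).trans hVle
  have hmeasqk : Measurable fun y => logisticDensity y * k y := measurable_q.mul i1
  have hqk0 : ∀ y, 0 ≤ logisticDensity y * k y := fun y => mul_nonneg (q_nonneg y) (i2 y)
  have hl : ∫⁻ y in Set.Icc (0:ℝ) 1, ENNReal.ofReal (logisticDensity y * k y) = 1 := by
    rw [setLIntegral_eq_of_support_subset, ← setLIntegral_univ,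
      ← withDensity_apply _ MeasurableSet.univ, ← i4, ← hdens,
      Measure.map_apply (measurable_F.iterate n) MeasurableSet.univ, Set.preimage_univ, hmass]
    intro x hx
    by_contra hx'
    exact hx (by
      have : x ∉ Set.Ioo (0:ℝ) 1 := fun h => hx' (Set.Ioo_subset_Icc_self h)
      simp [q_zero this])
  have hqki : IntegrableOn (fun y => logisticDensity y * k y) (Set.Icc 0 1) := by
    refine ⟨hmeasqk.aestronglyMeasurable, ?_⟩
    rw [hasFiniteIntegral_iff_ofReal (ae_of_all _ hqk0), hl]
    exact ENNReal.one_lt_top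
  have hqk1 : ∫ y in Set.Icc (0:ℝ) 1, logisticDensity y * k y = 1 := by
    rw [integral_eq_lintegral_of_nonneg_ae (ae_of_all _ hqk0) hmeasqk.aestronglyMeasurable, hl]
    simp
  have hconst : ∀ c : ℝ, ∫ y in Set.Icc (0:ℝ) 1, logisticDensity y * c = c := by
    intro c; rw [integral_mul_const, q1, one_mul]
  have hptw : ∀ x ∈ Set.Icc (0:ℝ) 1, |k x - 1| ≤ V / 2 ^ n := by
    intro x hx
    rw [abs_le]
    constructor
    · have : ∫ y in Set.Icc (0:ℝ) 1, logisticDensity y * k y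
          ≤ ∫ y in Set.Icc (0:ℝ) 1, logisticDensity y * (k x + V / 2 ^ n) := by
        refine setIntegral_mono_on hqki (qi.mul_const _) measurableSet_Icc fun y hy => ?_
        exact mul_le_mul_of_nonneg_left (by linarith [hosc y hy x hx]) (q_nonneg y)
      rw [hqk1, hconst] at this
      linarith
    · have : ∫ y in Set.Icc (0:ℝ) 1, logisticDensity y * (k x - V / 2 ^ n)
          ≤ ∫ y in Set.Icc (0:ℝ) 1, logisticDensity y * k y := by
        refine setIntegral_mono_on (qi.mul_const _) hqki measurableSet_Icc fun y hy => ?_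
        exact mul_le_mul_of_nonneg_left (by linarith [hosc x hx y hy]) (q_nonneg y)
      rw [hqk1, hconst] at this
      linarith
  rw [hdens, i4]
  have hrn := Measure.rnDeriv_withDensity (volume : Measure ℝ) hmeasqk.ennreal_ofReal
  have hcongr : (∫ x in Set.Icc (0 : ℝ) 1,
        |(((volume.withDensity (fun y => ENNReal.ofReal (logisticDensity y * k y))).rnDeriv
          volume) x).toReal - logisticDensity x|)
      = ∫ x in Set.Icc (0 : ℝ) 1, |logisticDensity x * k x - logisticDensity x| := by
    apply integral_congr_ae
    filter_upwards [ae_restrict_of_ae hrn] with x hx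
    rw [hx, ENNReal.toReal_ofReal (hqk0 x)]
  rw [hcongr, ← hconst (V / 2 ^ n)]
  refine setIntegral_mono_on (hqki.sub qi).abs (qi.mul_const _) measurableSet_Icc fun x hx => ?_
  rw [show logisticDensity x * k x - logisticDensity x = logisticDensity x * (k x - 1) by ring,
    abs_mul, abs_of_nonneg (q_nonneg x)]
  exact mul_le_mul_of_nonneg_left (hptw x hx) (q_nonneg x)
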